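/- Let n ≥ 1, s ∈ ℝ and 0 < q, r ≤ ∞ satisfy either s/n + 1/q > 0 or (s/n + 1/q = 0 and r = ∞). Then the following are equivalent: (a) for every measurable f on ℝⁿ with ‖f‖_{K̇^s_{q,r}} < ∞ and every ε > 0 there exists g ∈ C_c^∞(ℝⁿ) with ‖f − g‖_{K̇^s_{q,r}} < ε; (b) q < ∞ and r < ∞. In other words, C_c^∞(ℝⁿ) is dense in K̇^s_{q,r}(ℝⁿ) if and only if 0 < q, r < ∞. -/

import Mathlib

open MeasureTheory Set ENNReal Filter

noncomputable section

abbrev Euc (n : ℕ) : Type := EuclideanSpace ℝ (Fin n)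

def annulus (n : ℕ) (j : ℤ) : Set (Euc n) :=
  {x : Euc n | (2 : ℝ) ^ (j - 1) ≤ ‖x‖ ∧ ‖x‖ < (2 : ℝ) ^ j}

def herzNorm (n : ℕ) (s : ℝ) (q r : ℝ≥0∞) (f : Euc n → ℝ) : ℝ≥0∞ :=
  if r = ⊤ then
    ⨆ j : ℤ, ENNReal.ofReal ((2 : ℝ) ^ ((j : ℝ) * s)) *
      eLpNorm ((annulus n j).indicator f) q volume
  else
    (∑' j : ℤ, (ENNReal.ofReal ((2 : ℝ) ^ ((j : ℝ) * s)) *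
      eLpNorm ((annulus n j).indicator f) q volume) ^ r.toReal) ^ (1 / r.toReal)

/-!
When `q, r < ∞`, summability of the blocks makes all but finitely many of them negligible, and on
each of the remaining annuli `f` lies in `L^q` and is approximated there by a test function
supported in the open annulus, so that the different approximants do not interact.

Both endpoint cases fail because of an explicit obstruction. For `q = ∞`, a function jumping across
a sphere stays at distance at least half the jump from every continuous function. For `r = ∞`, a
function all of whose blocks have size one stays at distance at least one from every compactly
supported function, which misses some annulus altogether.
-/

section SmoothApproximation

open Manifold

variable {E F : Type*} [NormedAddCommGroup E] [NormedSpace ℝ E] [FiniteDimensional ℝ E]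
  [NormedAddCommGroup F] [NormedSpace ℝ F]

lemma exists_contDiff_eqOn_one_tsupport_subset {K V : Set E} (hK : IsCompact K) (hV : IsOpen V)
    (hKV : K ⊆ V) :
    ∃ φ : E → ℝ, ContDiff ℝ (⊤ : ℕ∞) φ ∧ HasCompactSupport φ ∧ tsupport φ ⊆ V ∧ EqOn φ 1 K ∧
      ∀ x, φ x ∈ Icc 0 1 := by
  obtain ⟨L, hL, hKL, hLV⟩ := exists_compact_between hK hV hKV
  obtain ⟨φ, φ_one, φ_zero, φ_mem⟩ :=
    exists_contMDiffMap_one_nhds_of_subset_interior (n := (⊤ : ℕ∞)) 𝓘(ℝ, E) hK.isClosed hKL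
  have hsupp : tsupport φ ⊆ L :=
    closure_minimal (fun x hx ↦ not_imp_comm.1 (φ_zero x) hx) hL.isClosed
  exact ⟨φ, φ.contMDiff.contDiff, hL.of_isClosed_subset (isClosed_tsupport φ) hsupp,
    hsupp.trans hLV, fun x hx ↦ φ_one.self_of_nhdsSet x hx, φ_mem⟩

lemma eLpNorm_smul_sub_indicator_const_le {α : Type*} {mα : MeasurableSpace α} {μ : Measure α}
    {p : ℝ≥0∞} {φ : α → ℝ} {s D : Set α} (hφ : ∀ x, φ x ∈ Icc 0 1)
    (hD : EqOn φ (s.indicator 1) Dᶜ) (c : F) :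
    eLpNorm ((fun x ↦ φ x • c) - s.indicator fun _ ↦ c) p μ ≤
      eLpNorm (D.indicator fun _ ↦ c) p μ := by
  refine eLpNorm_mono fun x ↦ ?_
  have hfactor : φ x • c - s.indicator (fun _ ↦ c) x = (φ x - s.indicator 1 x) • c := by
    by_cases hx : x ∈ s <;> simp [hx, sub_smul]
  rw [Pi.sub_apply, hfactor, norm_smul]
  by_cases hx : x ∈ D
  · have hdiff : ‖φ x - s.indicator 1 x‖ ≤ 1 := by
      have hs : s.indicator (1 : α → ℝ) x ∈ Icc 0 1 := by by_cases h : x ∈ s <;> simp [h]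
      rw [Real.norm_eq_abs, abs_le]
      constructor <;> linarith [(hφ x).1, (hφ x).2, hs.1, hs.2]
    rw [indicator_of_mem hx]
    exact mul_le_of_le_one_left (norm_nonneg c) hdiff
  · simp [hD hx, hx]

variable [MeasurableSpace E] [BorelSpace E] {μ : Measure E} [IsFiniteMeasureOnCompacts μ]
  {p : ℝ≥0∞} {U : Set E} {ε : ℝ≥0∞}

lemma exists_contDiff_eLpNorm_sub_indicator_const_le (hp : p ≠ ⊤) (hU : IsOpen U)
    (hμU : ∀ᵐ x ∂μ, x ∈ U) {s : Set E} (hs : MeasurableSet s) (hμs : μ s ≠ ⊤) (c : F)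
    (hε : ε ≠ 0) :
    ∃ g : E → F, eLpNorm (g - s.indicator fun _ ↦ c) p μ ≤ ε ∧
      ContDiff ℝ (⊤ : ℕ∞) g ∧ HasCompactSupport g ∧ tsupport g ⊆ U := by
  obtain ⟨η, η_pos, hη⟩ := exists_eLpNorm_indicator_le (μ := μ) hp c hε
  have hη2 : (η : ℝ≥0∞) / 2 ≠ 0 := by simp [η_pos.ne']
  obtain ⟨K, hKsU, hK, hμK⟩ := (hs.inter hU.measurableSet).exists_isCompact_sdiff_lt
    (measure_ne_top_of_subset inter_subset_left hμs) hη2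
  obtain ⟨V, hKV, hV, -, hμV⟩ :=
    hK.measurableSet.exists_isOpen_sdiff_lt (hK.measure_lt_top (μ := μ)).ne hη2
  obtain ⟨φ, φ_smooth, φ_compact, φ_supp, φ_one, φ_mem⟩ := exists_contDiff_eqOn_one_tsupport_subset
    hK (hV.inter hU) (subset_inter hKV (hKsU.trans inter_subset_right))
  have hsupp : tsupport (fun x ↦ φ x • c) ⊆ tsupport φ := tsupport_smul_subset_left φ fun _ ↦ c
  refine ⟨fun x ↦ φ x • c, ?_, φ_smooth.smul contDiff_const, φ_compact.smul_right,
    hsupp.trans (φ_supp.trans inter_subset_right)⟩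
  have hD : EqOn φ (s.indicator 1) ((V \ K) ∪ (s \ K))ᶜ := by
    intro x hx
    by_cases hxK : x ∈ K
    · simp [φ_one hxK, (hKsU hxK).1]
    · have hxs : x ∉ s := fun h ↦ hx (.inr ⟨h, hxK⟩)
      have hxV : x ∉ V := fun h ↦ hx (.inl ⟨h, hxK⟩)
      simp [hxs, image_eq_zero_of_notMem_tsupport fun h ↦ hxV (φ_supp h).1]
  have hμsK : μ (s \ K) ≤ η / 2 :=
    calc μ (s \ K) ≤ μ ((s ∩ U) \ K) := by
          refine measure_mono_ae ?_
          filter_upwards [hμU] with x hxU hx using ⟨⟨hx.1, hxU⟩, hx.2⟩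
      _ ≤ η / 2 := hμK.le
  refine (eLpNorm_smul_sub_indicator_const_le φ_mem hD c).trans (hη _ ?_)
  calc μ ((V \ K) ∪ (s \ K)) ≤ μ (V \ K) + μ (s \ K) := measure_union_le _ _
    _ ≤ η / 2 + η / 2 := add_le_add hμV.le hμsK
    _ = η := ENNReal.add_halves _

lemma exists_contDiff_tsupport_subset_eLpNorm_sub_le (hp : p ≠ ⊤) (hU : IsOpen U)
    (hμU : ∀ᵐ x ∂μ, x ∈ U) {f : E → F} (hf : MemLp f p μ) (hε : ε ≠ 0) :
    ∃ g : E → F, eLpNorm (f - g) p μ ≤ ε ∧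
      ContDiff ℝ (⊤ : ℕ∞) g ∧ HasCompactSupport g ∧ tsupport g ⊆ U := by
  refine hf.induction_dense hp _ ?_ ?_ ?_ hε
  · exact fun c s hs hμs ε hε ↦
      exists_contDiff_eLpNorm_sub_indicator_const_le hp hU hμU hs hμs.ne c hε
  · rintro f g ⟨hf, hf', hfU⟩ ⟨hg, hg', hgU⟩
    exact ⟨hf.add hg, hf'.add hg', (tsupport_add f g).trans (union_subset hfU hgU)⟩
  · exact fun f hf ↦ hf.1.continuous.aestronglyMeasurable

lemma exists_contDiff_support_subset_biUnion_eLpNorm_restrict_sub_le {ι : Type*} {A : ι → Set E}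
    (hA : Pairwise fun i j ↦ Disjoint (A i) (A j)) (hμA : ∀ j, μ (frontier (A j)) = 0)
    (hp : p ≠ ⊤) {f : E → F} (hf : ∀ j, MemLp f p (μ.restrict (A j))) {δ : ι → ℝ≥0∞}
    (hδ : ∀ j, δ j ≠ 0) (t : Finset ι) :
    ∃ g : E → F, ContDiff ℝ (⊤ : ℕ∞) g ∧ HasCompactSupport g ∧
      Function.support g ⊆ ⋃ j ∈ t, A j ∧
      ∀ j ∈ t, eLpNorm (f - g) p (μ.restrict (A j)) ≤ δ j := by
  have hmem : ∀ j, ∀ᵐ x ∂μ.restrict (A j), x ∈ A j := fun j ↦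
    ae_restrict_mem₀ (nullMeasurableSet_of_null_frontier (hμA j))
  have hint : ∀ j, ∀ᵐ x ∂μ.restrict (A j), x ∈ interior (A j) := by
    intro j
    rw [← Measure.restrict_congr_set (interior_ae_eq_of_null_frontier (hμA j))]
    exact ae_restrict_mem isOpen_interior.measurableSet
  choose g g_approx g_smooth g_compact g_supp using fun j ↦
    exists_contDiff_tsupport_subset_eLpNorm_sub_le hp isOpen_interior (hint j) (hf j) (hδ j)
  have hsupp : ∀ j, Function.support (g j) ⊆ A j := fun j ↦
    (subset_tsupport _).trans ((g_supp j).trans interior_subset)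
  have hsum : Function.support (fun x ↦ ∑ j ∈ t, g j x) ⊆ ⋃ j ∈ t, Function.support (g j) := by
    intro x hx
    obtain ⟨j, hj, hjx⟩ := Finset.exists_ne_zero_of_sum_ne_zero hx
    exact mem_biUnion (x := j) hj hjx
  refine ⟨fun x ↦ ∑ j ∈ t, g j x, ContDiff.sum fun j _ ↦ g_smooth j, ?_, ?_, fun j hj ↦ ?_⟩
  · refine .of_support_subset_isCompact (t.isCompact_biUnion fun j _ ↦ g_compact j) ?_
    exact hsum.trans (iUnion₂_mono fun j _ ↦ subset_tsupport (g j))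
  · exact hsum.trans (iUnion₂_mono fun j _ ↦ hsupp j)
  · have heq : f - (fun x ↦ ∑ i ∈ t, g i x) =ᵐ[μ.restrict (A j)] f - g j := by
      filter_upwards [hmem j] with x hx
      rw [Pi.sub_apply, Pi.sub_apply,
        Finset.sum_eq_single_of_mem j hj fun i _ hij ↦ ?_]
      by_contra h
      exact disjoint_left.1 (hA hij) (hsupp i h) hx
    rw [eLpNorm_congr_ae heq]
    exact g_approx j

end SmoothApproximation

lemma exists_finset_forall_tsum_lt {ι : Type*} [Countable ι] {b : ι → ℝ≥0∞} (hb : ∑' j, b j ≠ ⊤)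
    {η : ℝ≥0∞} (hη : η ≠ 0) :
    ∃ (t : Finset ι) (δ : ι → ℝ≥0∞), (∀ j, δ j ≠ 0) ∧ ∀ a : ι → ℝ≥0∞,
      (∀ j ∈ t, a j ≤ δ j) → (∀ j ∉ t, a j ≤ b j) → ∑' j, a j < η := by
  have hη2 : η / 2 ≠ 0 := by simp [hη]
  obtain ⟨δ, δ_pos, hδ⟩ := ENNReal.exists_pos_sum_of_countable' hη2 ι
  obtain ⟨t, ht⟩ := ((tendsto_order.1 (ENNReal.tendsto_tsum_compl_atTop_zero hb)).2 _
    (pos_iff_ne_zero.2 hη2)).exists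
  refine ⟨t, δ, fun j ↦ (δ_pos j).ne', fun a hat hab ↦ ?_⟩
  calc ∑' j, a j ≤ ∑' j, (δ j + {j | j ∉ t}.indicator b j) := by
        refine ENNReal.tsum_le_tsum fun j ↦ ?_
        by_cases hj : j ∈ t
        · exact (hat j hj).trans le_self_add
        · rw [indicator_of_mem (show j ∈ {j | j ∉ t} from hj)]
          exact (hab j hj).trans le_add_self
    _ = ∑' j, δ j + ∑' j : {j // j ∉ t}, b j := by rw [ENNReal.tsum_add, ← tsum_subtype]; rfl
    _ < η / 2 + η / 2 := ENNReal.add_lt_add hδ ht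
    _ = η := ENNReal.add_halves η

lemma enorm_le_eLpNorm_top_restrict_of_mem_closure {X F : Type*} [TopologicalSpace X]
    [MeasurableSpace X] [OpensMeasurableSpace X] [NormedAddCommGroup F] {μ : Measure X}
    [μ.IsOpenPosMeasure] {U : Set X} (hU : IsOpen U) {h : X → F} (hh : Continuous h) {x : X}
    (hx : x ∈ closure U) : ‖h x‖ₑ ≤ eLpNorm h ⊤ (μ.restrict U) := by
  set M := eLpNorm h ⊤ (μ.restrict U)
  have hclosed : IsClosed {y | ‖h y‖ₑ ≤ M} := isClosed_le hh.enorm continuous_const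
  have hae : ∀ᵐ y ∂μ, y ∈ U → ‖h y‖ₑ ≤ M := by
    rw [← ae_restrict_iff' hU.measurableSet]
    exact ae_le_eLpNormEssSup
  have hempty : U \ {y | ‖h y‖ₑ ≤ M} = ∅ := by
    rw [← (hU.sdiff hclosed).measure_eq_zero_iff μ]
    refine measure_mono_null ?_ (ae_iff.1 hae)
    exact fun y hy ↦ Classical.not_imp.2 hy
  exact closure_minimal (sdiff_eq_empty.1 hempty) hclosed hx

lemma enorm_sub_le_two_mul_eLpNorm_top_restrict_of_mem_closure {X F : Type*} [TopologicalSpace X]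
    [MeasurableSpace X] [OpensMeasurableSpace X] [NormedAddCommGroup F] {μ : Measure X}
    [μ.IsOpenPosMeasure] {S U V : Set X} (hU : IsOpen U) (hV : IsOpen V) (hUS : U ⊆ S)
    (hVS : V ⊆ S) {x : X} (hxU : x ∈ closure U) (hxV : x ∈ closure V) {a b : F} {f g : X → F}
    (hfU : ∀ y ∈ U, f y = a) (hfV : ∀ y ∈ V, f y = b) (hg : Continuous g) :
    ‖a - b‖ₑ ≤ 2 * eLpNorm (f - g) ⊤ (μ.restrict S) := by
  have hside : ∀ {W : Set X} {c : F}, IsOpen W → W ⊆ S → x ∈ closure W → (∀ y ∈ W, f y = c) →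
      ‖c - g x‖ₑ ≤ eLpNorm (f - g) ⊤ (μ.restrict S) := by
    intro W c hW hWS hxW hfW
    calc ‖c - g x‖ₑ ≤ eLpNorm (fun y ↦ c - g y) ⊤ (μ.restrict W) :=
          enorm_le_eLpNorm_top_restrict_of_mem_closure hW (continuous_const.sub hg) hxW
      _ = eLpNorm (f - g) ⊤ (μ.restrict W) := by
          refine eLpNorm_congr_ae ?_
          filter_upwards [ae_restrict_mem hW.measurableSet] with y hy
          rw [Pi.sub_apply, hfW y hy]
      _ ≤ eLpNorm (f - g) ⊤ (μ.restrict S) :=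
          eLpNorm_mono_measure _ (Measure.restrict_mono_set μ hWS)
  calc ‖a - b‖ₑ = ‖(a - g x) - (b - g x)‖ₑ := by rw [sub_sub_sub_cancel_right]
    _ ≤ ‖a - g x‖ₑ + ‖b - g x‖ₑ := enorm_sub_le
    _ ≤ 2 * eLpNorm (f - g) ⊤ (μ.restrict S) := by
        rw [two_mul]
        exact add_le_add (hside hU hUS hxU hfU) (hside hV hVS hxV hfV)

lemma smul_mem_closure_preimage_norm_Ioo {E : Type*} [NormedAddCommGroup E] [NormedSpace ℝ E]
    {u : E} (hu : ‖u‖ = 1) {a b c : ℝ} (ha : 0 ≤ a) (hab : a < b) (hc : c ∈ Icc a b) :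
    c • u ∈ closure ((‖·‖) ⁻¹' Ioo a b : Set E) := by
  rw [← closure_Ioo hab.ne] at hc
  refine map_mem_closure (f := fun t : ℝ ↦ t • u) (by fun_prop) hc fun t ht ↦ ?_
  rwa [mem_preimage, norm_smul, hu, mul_one, Real.norm_of_nonneg (ha.trans ht.1.le)]

lemma one_le_two_mul_eLpNorm_top_indicator_preimage_norm_sub {E : Type*}
    [NormedAddCommGroup E] [NormedSpace ℝ E] [Nontrivial E] [MeasurableSpace E]
    [OpensMeasurableSpace E] {μ : Measure E} [μ.IsOpenPosMeasure] {g : E → ℝ} (hg : Continuous g)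
    {a b c : ℝ} (ha : 0 ≤ a) (hab : a < b) (hbc : b < c) :
    1 ≤ 2 * eLpNorm (((‖·‖) ⁻¹' Ico a b : Set E).indicator 1 - g) ⊤
      (μ.restrict ((‖·‖) ⁻¹' Ico a c)) := by
  obtain ⟨u, hu⟩ := exists_norm_eq E zero_le_one
  have hopen : ∀ a b : ℝ, IsOpen ((‖·‖) ⁻¹' Ioo a b : Set E) :=
    fun a b ↦ isOpen_Ioo.preimage continuous_norm
  have hinner : ((‖·‖) ⁻¹' Ioo a b : Set E) ⊆ (‖·‖) ⁻¹' Ico a c :=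
    preimage_mono (Ioo_subset_Ico_self.trans (Ico_subset_Ico_right hbc.le))
  have houter : ((‖·‖) ⁻¹' Ioo b c : Set E) ⊆ (‖·‖) ⁻¹' Ico a c :=
    preimage_mono (Ioo_subset_Ico_self.trans (Ico_subset_Ico_left hab.le))
  have hone : ∀ y ∈ ((‖·‖) ⁻¹' Ioo a b : Set E),
      ((‖·‖) ⁻¹' Ico a b : Set E).indicator (1 : E → ℝ) y = 1 :=
    fun y hy ↦ indicator_of_mem (Ioo_subset_Ico_self hy) 1
  have hzero : ∀ y ∈ ((‖·‖) ⁻¹' Ioo b c : Set E),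
      ((‖·‖) ⁻¹' Ico a b : Set E).indicator (1 : E → ℝ) y = 0 :=
    fun y hy ↦ indicator_of_notMem (fun h ↦ h.2.not_gt hy.1) 1
  simpa using enorm_sub_le_two_mul_eLpNorm_top_restrict_of_mem_closure (μ := μ)
    (hopen a b) (hopen b c) hinner houter
    (smul_mem_closure_preimage_norm_Ioo hu ha hab (right_mem_Icc.2 hab.le))
    (smul_mem_closure_preimage_norm_Ioo hu (ha.trans hab.le) hbc (left_mem_Icc.2 hbc.le))
    hone hzero hg

section Annulus

variable (n : ℕ)

lemma measurableSet_annulus (j : ℤ) : MeasurableSet (annulus n j) :=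
  measurable_norm measurableSet_Ico

lemma pairwise_disjoint_annulus : Pairwise fun i j ↦ Disjoint (annulus n i) (annulus n j) := by
  refine fun i j hij ↦ disjoint_left.2 fun x hi hj ↦ hij ?_
  have h₁ : (2 : ℝ) ^ (i - 1) < 2 ^ j := hi.1.trans_lt hj.2
  have h₂ : (2 : ℝ) ^ (j - 1) < 2 ^ i := hj.1.trans_lt hi.2
  rw [zpow_lt_zpow_iff_right₀ (by norm_num)] at h₁ h₂
  lia

lemma volume_frontier_annulus (j : ℤ) : volume (frontier (annulus n j)) = 0 := by
  have hball : ∀ ρ : ℝ, volume (frontier (Metric.ball (0 : Euc n) ρ)) = 0 :=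
    fun ρ ↦ (convex_ball 0 ρ).addHaar_frontier volume
  have hannulus : annulus n j = (Metric.ball 0 (2 ^ (j - 1)))ᶜ ∩ Metric.ball 0 (2 ^ j) := by
    ext x
    simp [annulus]
  have hsubset := frontier_inter_subset (Metric.ball (0 : Euc n) (2 ^ (j - 1)))ᶜ
    (Metric.ball 0 (2 ^ j))
  rw [← hannulus, frontier_compl] at hsubset
  exact measure_mono_null (hsubset.trans (union_subset_union inter_subset_left inter_subset_right))
    (measure_union_null (hball _) (hball _))

lemma volume_annulus_ne_top (j : ℤ) : volume (annulus n j) ≠ ⊤ :=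
  measure_ne_top_of_subset (fun _ hx ↦ mem_ball_zero_iff.2 hx.2)
    (measure_ball_lt_top (x := (0 : Euc n)) (r := 2 ^ j)).ne

lemma volume_annulus_ne_zero [NeZero n] (j : ℤ) : volume (annulus n j) ≠ 0 := by
  have hlt : (2 : ℝ) ^ (j - 1) < 2 ^ j := zpow_lt_zpow_right₀ (by norm_num) (by lia)
  obtain ⟨ρ, hρ⟩ := exists_between hlt
  have hρ₀ : 0 ≤ ρ := le_trans (by positivity) hρ.1.le
  obtain ⟨x, hx⟩ := exists_norm_eq (Euc n) hρ₀
  have hopen : IsOpen ((‖·‖) ⁻¹' Ioo (2 ^ (j - 1)) (2 ^ j) : Set (Euc n)) :=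
    isOpen_Ioo.preimage continuous_norm
  have hpos := hopen.measure_pos volume ⟨x, by rwa [mem_preimage, hx]⟩
  exact (hpos.trans_le (measure_mono (preimage_mono Ioo_subset_Ico_self))).ne'

variable {n}

lemma exists_disjoint_annulus_of_isBounded {K : Set (Euc n)} (hK : Bornology.IsBounded K) :
    ∃ j, Disjoint K (annulus n j) := by
  obtain ⟨R, hR⟩ := hK.subset_closedBall 0
  obtain ⟨N, hN⟩ := pow_unbounded_of_one_lt R (show (1 : ℝ) < 2 by norm_num)
  refine ⟨N + 1, disjoint_left.2 fun x hxK hx ↦ ?_⟩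
  have hle : ‖x‖ ≤ R := mem_closedBall_zero_iff.1 (hR hxK)
  have hge : (2 : ℝ) ^ N ≤ ‖x‖ := by simpa using hx.1
  linarith

end Annulus

/-- The `j`-th block `2^{js} ‖f χ_{A_j}‖_{L^q}` of the Herz norm, written with the measure
restricted to the annulus. -/
def herzBlock (n : ℕ) (s : ℝ) (q : ℝ≥0∞) (f : Euc n → ℝ) (j : ℤ) : ℝ≥0∞ :=
  ENNReal.ofReal ((2 : ℝ) ^ ((j : ℝ) * s)) * eLpNorm f q (volume.restrict (annulus n j))

section HerzNorm

variable {n : ℕ} {s : ℝ} {q r : ℝ≥0∞} {f g : Euc n → ℝ} {j : ℤ}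

lemma ofReal_two_rpow_ne_zero (t : ℝ) : ENNReal.ofReal ((2 : ℝ) ^ t) ≠ 0 :=
  (ENNReal.ofReal_pos.2 (Real.rpow_pos_of_pos two_pos t)).ne'

lemma herzBlock_congr (h : EqOn f g (annulus n j)) : herzBlock n s q f j = herzBlock n s q g j := by
  rw [herzBlock, herzBlock, eLpNorm_congr_ae]
  exact ae_restrict_of_forall_mem (measurableSet_annulus n j) h

lemma herzBlock_lt_top_iff :
    herzBlock n s q f j < ⊤ ↔ eLpNorm f q (volume.restrict (annulus n j)) < ⊤ := by
  simp only [herzBlock, ENNReal.mul_lt_top_iff, ENNReal.ofReal_lt_top, true_and,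
    ofReal_two_rpow_ne_zero, false_or, or_iff_left_iff_imp]
  exact fun h ↦ h ▸ ENNReal.zero_lt_top

lemma herzNorm_top : herzNorm n s q ⊤ f = ⨆ j, herzBlock n s q f j := by
  simp only [herzNorm, herzBlock, if_true,
    eLpNorm_indicator_eq_eLpNorm_restrict (measurableSet_annulus n _)]

lemma herzNorm_of_ne_top (hr : r ≠ ⊤) :
    herzNorm n s q r f = (∑' j, herzBlock n s q f j ^ r.toReal) ^ r.toReal⁻¹ := by
  simp only [herzNorm, herzBlock, if_neg hr, one_div,
    eLpNorm_indicator_eq_eLpNorm_restrict (measurableSet_annulus n _)]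

lemma herzNorm_lt_iff (hr₀ : r ≠ 0) (hr : r ≠ ⊤) {c : ℝ≥0∞} :
    herzNorm n s q r f < c ↔ ∑' j, herzBlock n s q f j ^ r.toReal < c ^ r.toReal := by
  rw [herzNorm_of_ne_top hr, ENNReal.rpow_inv_lt_iff (ENNReal.toReal_pos hr₀ hr)]

lemma herzBlock_le_herzNorm (hr₀ : r ≠ 0) (j : ℤ) :
    herzBlock n s q f j ≤ herzNorm n s q r f := by
  rcases eq_or_ne r ⊤ with rfl | hr
  · rw [herzNorm_top]
    exact le_iSup (herzBlock n s q f) j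
  · rw [herzNorm_of_ne_top hr, ENNReal.le_rpow_inv_iff (ENNReal.toReal_pos hr₀ hr)]
    exact ENNReal.le_tsum (f := fun i ↦ herzBlock n s q f i ^ r.toReal) j

lemma herzNorm_eq_herzBlock_of_support_subset (hr₀ : r ≠ 0)
    (hf : Function.support f ⊆ annulus n j) : herzNorm n s q r f = herzBlock n s q f j := by
  have hzero : ∀ i ≠ j, herzBlock n s q f i = 0 := by
    intro i hij
    rw [herzBlock_congr (g := 0), herzBlock, eLpNorm_zero, mul_zero]
    intro x hx
    exact Function.notMem_support.1 fun h ↦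
      disjoint_left.1 (pairwise_disjoint_annulus n hij) hx (hf h)
  refine le_antisymm ?_ (herzBlock_le_herzNorm hr₀ j)
  rcases eq_or_ne r ⊤ with rfl | hr
  · rw [herzNorm_top]
    refine iSup_le fun i ↦ ?_
    rcases eq_or_ne i j with rfl | hij
    · exact le_rfl
    · simp [hzero i hij]
  · have hr_pos := ENNReal.toReal_pos hr₀ hr
    rw [herzNorm_of_ne_top hr, tsum_eq_single j fun i hij ↦ by simp [hzero i hij, hr_pos],
      ENNReal.rpow_rpow_inv hr_pos.ne']

lemma memLp_restrict_annulus_of_herzNorm_lt_top (hr₀ : r ≠ 0) (hf : AEStronglyMeasurable f)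
    (hfin : herzNorm n s q r f < ⊤) (j : ℤ) : MemLp f q (volume.restrict (annulus n j)) :=
  ⟨hf.restrict, herzBlock_lt_top_iff.1 ((herzBlock_le_herzNorm hr₀ j).trans_lt hfin)⟩

lemma exists_contDiff_herzNorm_sub_lt (hr₀ : r ≠ 0) (hq : q ≠ ⊤) (hr : r ≠ ⊤)
    (hf : AEStronglyMeasurable f) (hfin : herzNorm n s q r f < ⊤) {ε : ℝ≥0∞} (hε : ε ≠ 0) :
    ∃ g : Euc n → ℝ, ContDiff ℝ (⊤ : ℕ∞) g ∧ HasCompactSupport g ∧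
      herzNorm n s q r (f - g) < ε := by
  have hr_pos : 0 < r.toReal := ENNReal.toReal_pos hr₀ hr
  have hsum : ∑' j, herzBlock n s q f j ^ r.toReal ≠ ⊤ :=
    ((herzNorm_lt_iff hr₀ hr).1 hfin).ne_top
  have hε' : ε ^ r.toReal ≠ 0 := by simp [ENNReal.rpow_eq_zero_iff, hε, hr_pos.le]
  obtain ⟨t, δ, δ_ne_zero, hδ⟩ := exists_finset_forall_tsum_lt hsum hε'
  have hradius : ∀ j, δ j ^ r.toReal⁻¹ / ENNReal.ofReal (2 ^ ((j : ℝ) * s)) ≠ 0 := fun j ↦ by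
    simp [ENNReal.div_eq_zero_iff, ENNReal.rpow_eq_zero_iff, δ_ne_zero, hr_pos.le]
  obtain ⟨g, g_smooth, g_compact, g_supp, g_approx⟩ :=
    exists_contDiff_support_subset_biUnion_eLpNorm_restrict_sub_le (pairwise_disjoint_annulus n)
      (volume_frontier_annulus n) hq (memLp_restrict_annulus_of_herzNorm_lt_top hr₀ hf hfin)
      hradius t
  refine ⟨g, g_smooth, g_compact, (herzNorm_lt_iff hr₀ hr).2 (hδ _ (fun j hj ↦ ?_) fun j hj ↦ ?_)⟩
  · rw [← ENNReal.le_rpow_inv_iff hr_pos]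
    exact (mul_le_mul_right (g_approx j hj) _).trans ENNReal.mul_div_le
  · have heq : EqOn (f - g) f (annulus n j) := by
      intro x hx
      suffices g x = 0 by rw [Pi.sub_apply, this, sub_zero]
      by_contra hgx
      obtain ⟨i, hi, hxi⟩ := mem_iUnion₂.1 (g_supp hgx)
      have hij : i ≠ j := fun h ↦ hj (h ▸ hi)
      exact disjoint_left.1 (pairwise_disjoint_annulus n hij) hxi hx
    rw [herzBlock_congr heq]

lemma exists_forall_continuous_half_le_herzNorm_top_sub [NeZero n] (s : ℝ) (hr₀ : r ≠ 0) :
    ∃ f : Euc n → ℝ, Measurable f ∧ herzNorm n s ⊤ r f < ⊤ ∧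
      ∀ g : Euc n → ℝ, Continuous g → 1 / 2 ≤ herzNorm n s ⊤ r (f - g) := by
  have hA : annulus n 0 = (‖·‖) ⁻¹' Ico (1 / 2) 1 := by
    ext x
    norm_num [annulus]
  have hBA : ((‖·‖) ⁻¹' Ico (1 / 2) (3 / 4) : Set (Euc n)) ⊆ annulus n 0 :=
    hA ▸ preimage_mono (Ico_subset_Ico_right (by norm_num))
  have hB : MeasurableSet ((‖·‖) ⁻¹' Ico (1 / 2) (3 / 4) : Set (Euc n)) :=
    measurable_norm measurableSet_Ico
  refine ⟨((‖·‖) ⁻¹' Ico (1 / 2) (3 / 4)).indicator 1, measurable_one.indicator hB, ?_, ?_⟩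
  · rw [herzNorm_eq_herzBlock_of_support_subset hr₀ (support_indicator_subset.trans hBA),
      herzBlock_lt_top_iff]
    have hone : MemLp (fun _ : Euc n ↦ (1 : ℝ)) ⊤ (volume.restrict (annulus n 0)) :=
      memLp_top_const 1
    exact (hone.indicator hB).eLpNorm_lt_top
  · intro g hg
    have hjump := one_le_two_mul_eLpNorm_top_indicator_preimage_norm_sub (μ := volume) hg
      (a := 1 / 2) (b := 3 / 4) (c := 1) (by norm_num) (by norm_num) (by norm_num)
    rw [← hA] at hjump
    have hblock := herzBlock_le_herzNorm (n := n) (s := s) (q := ⊤)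
      (f := ((‖·‖) ⁻¹' Ico (1 / 2) (3 / 4)).indicator 1 - g) hr₀ 0
    rw [herzBlock, Int.cast_zero, zero_mul, Real.rpow_zero, ENNReal.ofReal_one, one_mul] at hblock
    exact (ENNReal.div_le_of_le_mul' hjump).trans hblock

lemma exists_herzBlock_const_eq_one [NeZero n] (s : ℝ) (hq₀ : q ≠ 0) (j : ℤ) :
    ∃ c : ℝ, herzBlock n s q (fun _ ↦ c) j = 1 := by
  have hμ : volume.restrict (annulus n j) ≠ 0 :=
    Measure.restrict_eq_zero.not.2 (volume_annulus_ne_zero n j)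
  set m := ENNReal.ofReal ((2 : ℝ) ^ ((j : ℝ) * s)) * volume (annulus n j) ^ (1 / q.toReal)
  have hm₀ : m ≠ 0 := mul_ne_zero (ofReal_two_rpow_ne_zero _)
    (ENNReal.rpow_pos (pos_iff_ne_zero.2 (volume_annulus_ne_zero n j))
      (volume_annulus_ne_top n j)).ne'
  have hm : m ≠ ⊤ := ENNReal.mul_ne_top ENNReal.ofReal_ne_top
    (ENNReal.rpow_ne_top_of_nonneg (by positivity) (volume_annulus_ne_top n j))
  refine ⟨m⁻¹.toReal, ?_⟩
  calc herzBlock n s q (fun _ ↦ m⁻¹.toReal) j = ‖m⁻¹.toReal‖ₑ * m := by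
        rw [herzBlock, eLpNorm_const _ hq₀ hμ, Measure.restrict_apply_univ, mul_left_comm]
    _ = m⁻¹ * m := by
        rw [Real.enorm_eq_ofReal ENNReal.toReal_nonneg,
          ENNReal.ofReal_toReal (ENNReal.inv_ne_top.2 hm₀)]
    _ = 1 := ENNReal.inv_mul_cancel hm₀ hm

lemma exists_measurable_forall_herzBlock_eq_one [NeZero n] (s : ℝ) (hq₀ : q ≠ 0) :
    ∃ f : Euc n → ℝ, Measurable f ∧ ∀ j, herzBlock n s q f j = 1 := by
  choose c hc using exists_herzBlock_const_eq_one (n := n) s hq₀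
  obtain ⟨f, f_meas, hf⟩ := exists_measurable_piecewise (annulus n) (measurableSet_annulus n)
    (fun j _ ↦ c j) (fun _ ↦ measurable_const) fun i j hij x hx ↦
      (disjoint_left.1 (pairwise_disjoint_annulus n hij) hx.1 hx.2).elim
  exact ⟨f, f_meas, fun j ↦ (herzBlock_congr (hf j)).trans (hc j)⟩

lemma exists_forall_hasCompactSupport_one_le_herzNorm_top_sub [NeZero n] (s : ℝ) (hq₀ : q ≠ 0) :
    ∃ f : Euc n → ℝ, Measurable f ∧ herzNorm n s q ⊤ f < ⊤ ∧
      ∀ g : Euc n → ℝ, HasCompactSupport g → 1 ≤ herzNorm n s q ⊤ (f - g) := by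
  obtain ⟨f, f_meas, hf⟩ := exists_measurable_forall_herzBlock_eq_one (n := n) s hq₀
  refine ⟨f, f_meas, by simp [herzNorm_top, hf], fun g hg ↦ ?_⟩
  obtain ⟨j, hj⟩ := exists_disjoint_annulus_of_isBounded hg.isCompact.isBounded
  have heq : EqOn f (f - g) (annulus n j) := fun x hx ↦ by
    simp [image_eq_zero_of_notMem_tsupport (disjoint_right.1 hj hx)]
  calc 1 = herzBlock n s q (f - g) j := by rw [← herzBlock_congr heq, hf]
    _ ≤ herzNorm n s q ⊤ (f - g) := herzBlock_le_herzNorm ENNReal.top_ne_zero j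

end HerzNorm

theorem herz_dense_iff_general (n : ℕ) (hn : 1 ≤ n) (s : ℝ) (q r : ℝ≥0∞) (hq : 0 < q)
    (hr : 0 < r) :
    (∀ f : Euc n → ℝ, Measurable f → herzNorm n s q r f < ⊤ →
        ∀ ε : ℝ, 0 < ε → ∃ g : Euc n → ℝ, ContDiff ℝ (⊤ : ℕ∞) g ∧ HasCompactSupport g ∧
          herzNorm n s q r (fun x => f x - g x) < ENNReal.ofReal ε) ↔
      (q < ⊤ ∧ r < ⊤) := by
  have : NeZero n := ⟨by lia⟩
  refine ⟨fun hdense ↦ ⟨lt_top_iff_ne_top.2 ?_, lt_top_iff_ne_top.2 ?_⟩, fun ⟨hq_top, hr_top⟩ ↦ ?_⟩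
  · rintro rfl
    obtain ⟨f, f_meas, f_fin, hf⟩ :=
      exists_forall_continuous_half_le_herzNorm_top_sub (n := n) s hr.ne'
    obtain ⟨g, g_smooth, -, hg⟩ := hdense f f_meas f_fin 2⁻¹ (by norm_num)
    rw [ENNReal.ofReal_inv_of_pos two_pos, ENNReal.ofReal_ofNat, ← one_div] at hg
    exact (hf g g_smooth.continuous).not_gt hg
  · rintro rfl
    obtain ⟨f, f_meas, f_fin, hf⟩ :=
      exists_forall_hasCompactSupport_one_le_herzNorm_top_sub (n := n) s hq.ne'
    obtain ⟨g, -, g_compact, hg⟩ := hdense f f_meas f_fin 1 one_pos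
    exact (hf g g_compact).not_gt (ENNReal.ofReal_one ▸ hg)
  · intro f f_meas f_fin ε ε_pos
    exact exists_contDiff_herzNorm_sub_lt hr.ne' hq_top.ne hr_top.ne f_meas.aestronglyMeasurable
      f_fin (ENNReal.ofReal_pos.2 ε_pos).ne'

/-- Under the condition guaranteeing `C_c^∞(ℝⁿ) ⊂ K̇^s_{q,r}(ℝⁿ)`, the space
`C_c^∞(ℝⁿ)` is dense in `K̇^s_{q,r}(ℝⁿ)` if and only if `q < ∞` and `r < ∞`. -/
theorem herz_dense_iff
    (n : ℕ) (hn : 1 ≤ n) (s : ℝ) (q r : ℝ≥0∞) (hq : 0 < q) (hr : 0 < r)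
    (hwd : 0 < s / (n : ℝ) + (q⁻¹).toReal ∨
      (s / (n : ℝ) + (q⁻¹).toReal = 0 ∧ r = ⊤)) :
    (∀ f : Euc n → ℝ, Measurable f → herzNorm n s q r f < ⊤ →
        ∀ ε : ℝ, 0 < ε → ∃ g : Euc n → ℝ, ContDiff ℝ (⊤ : ℕ∞) g ∧ HasCompactSupport g ∧
          herzNorm n s q r (fun x => f x - g x) < ENNReal.ofReal ε) ↔
      (q < ⊤ ∧ r < ⊤) :=
  herz_dense_iff_general n hn s q r hq hr
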